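/- Let W ⊆ ℝ² be a simple polygon with free space F, let x ∈ F, and let C be the connected component of F containing x. Then the set D₂(x) ∩ C is connected. -/

import Mathlib

open Metric Set

noncomputable section

/-- The Euclidean plane ℝ². -/
abbrev Plane : Type := EuclideanSpace ℝ (Fin 2)

/-- A simple polygon, given by a simple (injective) closed polygonal curve in the plane. -/
structure SimplePolygon where
  /-- the parametrization of the boundary curve over `[0,1]` -/
  toFun : ℝ → Plane
  continuous : Continuous toFun
  closed : toFun 0 = toFun 1
  injOn : Set.InjOn toFun (Set.Ico (0 : ℝ) 1)
  /-- the curve is polygonal: it is affine on each piece of some finite partition of `[0,1]` -/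
  polygonal : ∃ (n : ℕ) (t : Fin (n + 1) → ℝ),
    t 0 = 0 ∧ t (Fin.last n) = 1 ∧ StrictMono t ∧
    ∀ i : Fin n, ∀ s ∈ Set.Icc (t i.castSucc) (t i.succ),
      toFun s = toFun (t i.castSucc) +
        ((s - t i.castSucc) / (t i.succ - t i.castSucc)) •
          (toFun (t i.succ) - toFun (t i.castSucc))

/-- The boundary curve of a simple polygon, as a subset of the plane. -/
def SimplePolygon.bdryCurve (P : SimplePolygon) : Set Plane :=
  P.toFun '' Set.Icc 0 1

/-- The closed region bounded by a simple polygon: the union of the boundary curve with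
the bounded connected components of its complement. -/
def SimplePolygon.region (P : SimplePolygon) : Set Plane :=
  P.bdryCurve ∪
    {x | x ∉ P.bdryCurve ∧ Bornology.IsBounded (connectedComponentIn P.bdryCurveᶜ x)}

/-- The free space of a simple polygon: all positions whose open unit disc lies in the region. -/
def SimplePolygon.freeSpace (P : SimplePolygon) : Set Plane :=
  {x | Metric.ball x 1 ⊆ P.region}

/-!
The complement `U` of the region is connected: a point off the boundary curve lies in it exactly
when its component is unbounded, and all unbounded components contain the exterior of a large ball.

Let `a`, `b` be points at distance less than `2 * r` in a connected set `S` that stays at distance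
at least `r` from `U`. If a segment of length less than `2 * r` between points `u`, `v` of `U`
crossed `[a, b]`, then `w z = (z - u) / (z - v)` would omit the negative reals on `S` and the
positive reals on `[a, b]`. Moving `u` to `v` inside `U` shows that `w` has a continuous logarithm
on `S ∪ [a, b]`. Comparing it with the principal logarithm along `S` and along `[a, b]` puts `w a`
and `w b` in the same half plane, although `a` and `b` lie on different sides of the line `u v`.

Consequently the discs of radius `r` about points of `U` above and below the line `a b` do not meet
over `[a, b]`, so wherever the discs of one side reach across the line by some height, those of the
other side stay short of it by at least as much. The difference of the two maximal heights is the
graph of a path from `a` to `b` which stays at distance at least `r` from `U`. By Stewart's theorem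
the graph lies in the disc with diameter `[a, b]`, hence in the closed ball of radius `dist a b`
about `a`. With `a` the centre of the given ball, this path joins it to `b` within the intersection.
-/

section Logarithm

theorem sub_eq_sub_of_exp_eq_exp {X : Type*} [TopologicalSpace X] {S : Set X}
    (hS : IsPreconnected S) {f g : X → ℂ} (hf : ContinuousOn f S) (hg : ContinuousOn g S)
    (hfg : ∀ z ∈ S, Complex.exp (f z) = Complex.exp (g z)) {a b : X} (ha : a ∈ S) (hb : b ∈ S) :
    f a - g a = f b - g b := by
  have hlift : EqOn f (fun z ↦ g z + (f a - g a)) S :=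
    Complex.isCoveringMap_exp.eqOn_of_comp_eqOn hS hf (hg.add continuousOn_const)
      (fun z hz ↦ Subtype.ext <| by
        simp only [Function.comp_apply, Complex.exp_add, Complex.exp_sub, hfg z hz, hfg a ha,
          div_self (Complex.exp_ne_zero _), mul_one])
      ha (add_sub_cancel _ _).symm
  exact eq_sub_of_add_eq' (hlift hb).symm

theorem log_exp_sub_eq_log_exp_sub {X : Type*} [TopologicalSpace X] {S : Set X}
    (hS : IsPreconnected S) {θ : X → ℂ} (hθ : ContinuousOn θ S)
    (hslit : ∀ z ∈ S, Complex.exp (θ z) ∈ Complex.slitPlane) {a b : X} (ha : a ∈ S) (hb : b ∈ S) :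
    Complex.log (Complex.exp (θ a)) - θ a = Complex.log (Complex.exp (θ b)) - θ b :=
  sub_eq_sub_of_exp_eq_exp hS (hθ.cexp.clog hslit) hθ
    (fun _ _ ↦ Complex.exp_log (Complex.exp_ne_zero _)) ha hb

theorem im_ne_zero_of_mem_slitPlane {z : ℂ} (hz : z ∈ Complex.slitPlane)
    (hnegz : -z ∈ Complex.slitPlane) : z.im ≠ 0 := by
  rw [Complex.mem_slitPlane_iff] at hz hnegz
  rw [Complex.neg_re, Complex.neg_im, neg_ne_zero] at hnegz
  rcases hz with hre | him
  · exact hnegz.resolve_left (by linarith)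
  · exact him

theorem exp_im_pos_iff_of_mem_slitPlane {X : Type*} [TopologicalSpace X] {S I : Set X}
    (hS : IsPreconnected S) (hI : IsPreconnected I) {θ : X → ℂ} (hθ : ContinuousOn θ (S ∪ I))
    (hθS : ∀ z ∈ S, Complex.exp (θ z) ∈ Complex.slitPlane)
    (hθI : ∀ z ∈ I, -Complex.exp (θ z) ∈ Complex.slitPlane)
    {a b : X} (ha : a ∈ S ∩ I) (hb : b ∈ S ∩ I) :
    0 < (Complex.exp (θ a)).im ↔ 0 < (Complex.exp (θ b)).im := by
  have hshift (z : X) : Complex.exp (θ z + Real.pi * Complex.I) = -Complex.exp (θ z) :=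
    Complex.exp_antiperiodic _
  have hlogS := log_exp_sub_eq_log_exp_sub hS (hθ.mono subset_union_left) hθS ha.1 hb.1
  have hlogI := log_exp_sub_eq_log_exp_sub hI (θ := fun z ↦ θ z + Real.pi * Complex.I)
    ((hθ.mono subset_union_right).add continuousOn_const)
    (fun z hz ↦ (hshift z).symm ▸ hθI z hz) ha.2 hb.2
  simp only [hshift] at hlogI
  have harg : (-Complex.exp (θ a)).arg - (Complex.exp (θ a)).arg =
      (-Complex.exp (θ b)).arg - (Complex.exp (θ b)).arg := by
    simp only [← Complex.log_im, ← Complex.sub_im]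
    exact congrArg Complex.im (by linear_combination hlogI - hlogS)
  have him_pos_iff {z : X} (hz : z ∈ S ∩ I) : 0 < (Complex.exp (θ z)).im ↔
      (-Complex.exp (θ z)).arg - (Complex.exp (θ z)).arg = -Real.pi := by
    rw [sub_eq_iff_eq_add', ← sub_eq_add_neg, Complex.arg_neg_eq_arg_sub_pi_iff]
    simp only [im_ne_zero_of_mem_slitPlane (hθS z hz.1) (hθI z hz.2), false_and, or_false]
  rw [him_pos_iff ha, him_pos_iff hb, harg]

theorem exists_continuousOn_log_div {K U : Set ℂ} {δ : ℝ} (hδ : 0 < δ)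
    (hKU : ∀ z ∈ K, ∀ u ∈ U, δ ≤ dist z u) (hU : IsPreconnected U) {u v : ℂ}
    (hu : u ∈ U) (hv : v ∈ U) :
    ∃ θ : ℂ → ℂ, ContinuousOn θ K ∧ ∀ z ∈ K, Complex.exp (θ z) = (z - u) / (z - v) := by
  have hne : ∀ z ∈ K, ∀ u ∈ U, z - u ≠ 0 := fun z hz u hu ↦
    sub_ne_zero.2 (dist_pos.1 (hδ.trans_le (hKU z hz u hu)))
  refine hU.induction₂ (fun u v ↦ ∃ θ : ℂ → ℂ, ContinuousOn θ K ∧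
    ∀ z ∈ K, Complex.exp (θ z) = (z - u) / (z - v)) ?_ ?_ ?_ hu hv
  · rintro a -
    filter_upwards [mem_nhdsWithin_of_mem_nhds (ball_mem_nhds a hδ), self_mem_nhdsWithin]
      with b hb hbU
    have hslit : ∀ z ∈ K, (z - a) / (z - b) ∈ Complex.slitPlane := fun z hz ↦ by
      have hzb := hne z hz b hbU
      have hnear : (z - a) / (z - b) = 1 + (b - a) / (z - b) := by field_simp; ring
      rw [hnear]
      apply Complex.mem_slitPlane_of_norm_lt_one
      rw [norm_div, div_lt_one (norm_pos_iff.2 hzb), ← dist_eq_norm, ← dist_eq_norm]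
      exact (mem_ball.1 hb).trans_le (hKU z hz b hbU)
    exact ⟨fun z ↦ Complex.log ((z - a) / (z - b)),
      (ContinuousOn.div (by fun_prop) (by fun_prop) fun z hz ↦ hne z hz b hbU).clog hslit,
      fun z hz ↦ Complex.exp_log (Complex.slitPlane_ne_zero (hslit z hz))⟩
  · rintro a b c - hb - ⟨θ, hθ, hθexp⟩ ⟨η, hη, hηexp⟩
    refine ⟨fun z ↦ θ z + η z, hθ.add hη, fun z hz ↦ ?_⟩
    rw [Complex.exp_add, hθexp z hz, hηexp z hz, div_mul_div_cancel₀ (hne z hz b hb)]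
  · rintro a b - - ⟨θ, hθ, hθexp⟩
    refine ⟨fun z ↦ -θ z, hθ.neg, fun z hz ↦ ?_⟩
    rw [Complex.exp_neg, hθexp z hz, inv_div]

end Logarithm

section Segment

theorem exists_nonneg_eq_neg_of_notMem_slitPlane {w : ℂ} (hw : w ∉ Complex.slitPlane) :
    ∃ c : ℝ, 0 ≤ c ∧ w = -(c : ℂ) := by
  rw [Complex.mem_slitPlane_iff, not_or, not_lt, not_ne_iff] at hw
  exact ⟨-w.re, neg_nonneg.2 hw.1, Complex.ext (by simp) (by simp [hw.2])⟩

theorem div_sub_mem_slitPlane_iff {u v z : ℂ} (hzv : z ≠ v) :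
    (z - u) / (z - v) ∈ Complex.slitPlane ↔ z ∉ segment ℝ u v := by
  have hsub : z - v ≠ 0 := sub_ne_zero.2 hzv
  rw [← not_iff_not, not_not]
  constructor
  · intro hslit
    obtain ⟨c, hc, hw⟩ := exists_nonneg_eq_neg_of_notMem_slitPlane hslit
    rw [div_eq_iff hsub] at hw
    have hc' : (1 + c : ℂ) ≠ 0 := by exact_mod_cast (by positivity : 1 + c ≠ 0)
    refine ⟨1 / (1 + c), c / (1 + c), by positivity, by positivity, by field_simp, ?_⟩
    simp only [Complex.real_smul]
    push_cast
    field_simp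
    linear_combination -hw
  · rintro ⟨x, y, hx, hy, hxy, rfl⟩
    have hx0 : x ≠ 0 := fun hx0 ↦ hzv (by simp [hx0, show y = 1 by linarith])
    have hx0' : (x : ℂ) ≠ 0 := by exact_mod_cast hx0
    have hw : (x • u + y • v - u) / (x • u + y • v - v) = -((y / x : ℝ) : ℂ) := by
      rw [div_eq_iff hsub, eq_sub_of_add_eq' hxy]
      simp only [Complex.real_smul]
      push_cast
      field_simp
      ring
    rw [hw, Complex.neg_ofReal_mem_slitPlane, not_lt]
    exact div_nonneg hy hx

theorem sub_half_dist_le_dist_of_mem_segment {E : Type*} [SeminormedAddCommGroup E]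
    [NormedSpace ℝ E] {a b z u : E} {r : ℝ} (hz : z ∈ segment ℝ a b) (ha : r ≤ dist a u)
    (hb : r ≤ dist b u) : r - dist a b / 2 ≤ dist z u := by
  have hab := dist_add_dist_of_mem_segment hz
  have haz := dist_triangle a z u
  have hbz := dist_triangle b z u
  rw [dist_comm b z] at hbz
  linarith

/-- Twice the signed area of the triangle with vertices `z`, `u`, `v`; up to a positive factor it is
the imaginary part of `(z - u) / (z - v)`. -/
def doubleSignedArea (u v z : ℂ) : ℝ :=
  ((z - u) * (starRingEnd ℂ) (z - v)).im

theorem doubleSignedArea_combo (u v a b : ℂ) {x y : ℝ} (hxy : x + y = 1) :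
    doubleSignedArea u v (x • a + y • b) =
      x • doubleSignedArea u v a + y • doubleSignedArea u v b := by
  obtain rfl := eq_sub_of_add_eq' hxy
  simp only [doubleSignedArea, Complex.mul_im, Complex.conj_re, Complex.conj_im, Complex.sub_re,
    Complex.sub_im, Complex.add_re, Complex.add_im, Complex.smul_re, Complex.smul_im, smul_eq_mul]
  ring

theorem doubleSignedArea_eq_zero_of_mem_segment {u v z : ℂ} (hz : z ∈ segment ℝ u v) :
    doubleSignedArea u v z = 0 := by
  obtain ⟨x, y, -, -, hxy, rfl⟩ := hz
  rw [doubleSignedArea_combo u v u v hxy]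
  simp [doubleSignedArea]

theorem doubleSignedArea_pos_iff_neg {a b u v z₀ : ℂ} (hz₀ : z₀ ∈ segment ℝ a b)
    (hz₀uv : z₀ ∈ segment ℝ u v) (ha : doubleSignedArea u v a ≠ 0)
    (hb : doubleSignedArea u v b ≠ 0) :
    0 < doubleSignedArea u v a ↔ doubleSignedArea u v b < 0 := by
  obtain ⟨x, y, hx, hy, hxy, rfl⟩ := hz₀
  have hzero := (doubleSignedArea_combo u v a b hxy).symm.trans
    (doubleSignedArea_eq_zero_of_mem_segment hz₀uv)
  constructor
  · intro hapos
    by_contra hbneg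
    exact (convex_Ioi (0 : ℝ) hapos (hb.lt_of_le' (not_lt.1 hbneg)) hx hy hxy).ne' hzero
  · intro hbneg
    by_contra hapos
    exact (convex_Iio (0 : ℝ) (ha.lt_of_le (not_lt.1 hapos)) hbneg hx hy hxy).ne hzero

theorem im_div_sub (u v z : ℂ) :
    ((z - u) / (z - v)).im = doubleSignedArea u v z / Complex.normSq (z - v) := by
  rw [div_eq_mul_inv, Complex.inv_def, ← mul_assoc, Complex.im_mul_ofReal, doubleSignedArea,
    div_eq_mul_inv]

theorem im_div_sub_pos_iff {u v z : ℂ} (hzv : z ≠ v) :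
    0 < ((z - u) / (z - v)).im ↔ 0 < doubleSignedArea u v z := by
  rw [im_div_sub, div_pos_iff_of_pos_right (Complex.normSq_pos.2 (sub_ne_zero.2 hzv))]

theorem im_div_sub_eq_zero_iff {u v z : ℂ} (hzv : z ≠ v) :
    ((z - u) / (z - v)).im = 0 ↔ doubleSignedArea u v z = 0 := by
  rw [im_div_sub, div_eq_zero_iff, or_iff_left (Complex.normSq_pos.2 (sub_ne_zero.2 hzv)).ne']

theorem neg_div_sub_mem_slitPlane_of_mem_segment {a b u v z₀ z : ℂ} (hu : u ∉ segment ℝ a b)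
    (hv : v ∉ segment ℝ a b) (hz₀ : z₀ ∈ segment ℝ a b) (hz₀uv : z₀ ∈ segment ℝ u v)
    (hz : z ∈ segment ℝ a b) : -((z - u) / (z - v)) ∈ Complex.slitPlane := by
  have hne : ∀ x ∈ segment ℝ a b, x ≠ v := fun x hx hxv ↦ hv (hxv ▸ hx)
  have hw₀ := mt (div_sub_mem_slitPlane_iff (hne z₀ hz₀)).1 (not_not_intro hz₀uv)
  by_contra hw
  rw [Complex.mem_slitPlane_iff, not_or, not_lt, not_ne_iff] at hw₀ hw
  rw [Complex.neg_re, Complex.neg_im, neg_nonpos, neg_eq_zero] at hw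
  have hsub : segment ℝ z₀ z ⊆ segment ℝ a b := (convex_segment a b).segment_subset hz₀ hz
  have him : ∀ x ∈ segment ℝ z₀ z, ((x - u) / (x - v)).im = 0 := by
    intro x hx
    rw [im_div_sub_eq_zero_iff (hne x (hsub hx))]
    obtain ⟨s, t, -, -, hst, rfl⟩ := hx
    rw [doubleSignedArea_combo u v z₀ z hst, (im_div_sub_eq_zero_iff (hne z₀ hz₀)).1 hw₀.2,
      (im_div_sub_eq_zero_iff (hne z hz)).1 hw.2, smul_zero, smul_zero, add_zero]
  have hcont : ContinuousOn (fun x ↦ ((x - u) / (x - v)).re) (segment ℝ z₀ z) :=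
    Complex.continuous_re.comp_continuousOn <| ContinuousOn.div (by fun_prop) (by fun_prop)
      fun x hx ↦ sub_ne_zero.2 (hne x (hsub hx))
  obtain ⟨x, hx, hre⟩ := (convex_segment z₀ z).isPreconnected.intermediate_value
    (left_mem_segment ℝ z₀ z) (right_mem_segment ℝ z₀ z) hcont ⟨hw₀.1, hw.1⟩
  have hxu : x - u = 0 := (div_eq_zero_iff.1 (Complex.ext hre (him x hx))).resolve_right
    (sub_ne_zero.2 (hne x (hsub hx)))
  exact hu (sub_eq_zero.1 hxu ▸ hsub hx)

theorem disjoint_segment_of_le_dist {U S : Set ℂ} (hU : IsPreconnected U) (hS : IsPreconnected S)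
    {r : ℝ} (hSU : ∀ s ∈ S, ∀ u ∈ U, r ≤ dist s u) {a b u v : ℂ} (ha : a ∈ S) (hb : b ∈ S)
    (hab : dist a b < 2 * r) (hu : u ∈ U) (hv : v ∈ U) (huv : dist u v < 2 * r) :
    Disjoint (segment ℝ a b) (segment ℝ u v) := by
  rw [Set.disjoint_left]
  intro z₀ hz₀ hz₀uv
  have hδ : 0 < r - dist a b / 2 := by linarith
  have hfar : ∀ z ∈ S ∪ segment ℝ a b, ∀ p ∈ U, r - dist a b / 2 ≤ dist z p := by
    rintro z (hz | hz) p hp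
    · linarith [hSU z hz p hp, dist_nonneg (x := a) (y := b)]
    · exact sub_half_dist_le_dist_of_mem_segment hz (hSU a ha p hp) (hSU b hb p hp)
  have hne : ∀ z ∈ S ∪ segment ℝ a b, ∀ p ∈ U, z ≠ p := fun z hz p hp ↦
    dist_pos.1 (hδ.trans_le (hfar z hz p hp))
  obtain ⟨θ, hθ, hexp⟩ := exists_continuousOn_log_div hδ hfar hU hu hv
  have hwS : ∀ z ∈ S, (z - u) / (z - v) ∈ Complex.slitPlane := by
    intro z hz
    rw [div_sub_mem_slitPlane_iff (hne z (.inl hz) v hv)]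
    intro hzuv
    linarith [dist_add_dist_of_mem_segment hzuv, dist_comm u z, hSU z hz u hu, hSU z hz v hv]
  have hwI : ∀ z ∈ segment ℝ a b, -((z - u) / (z - v)) ∈ Complex.slitPlane := fun z hz ↦
    neg_div_sub_mem_slitPlane_of_mem_segment (fun hu' ↦ hne u (.inr hu') u hu rfl)
      (fun hv' ↦ hne v (.inr hv') v hv rfl) hz₀ hz₀uv hz
  have haI := left_mem_segment ℝ a b
  have hbI := right_mem_segment ℝ a b
  have hsign := exp_im_pos_iff_of_mem_slitPlane hS (convex_segment a b).isPreconnected hθ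
    (fun z hz ↦ (hexp z (.inl hz)).symm ▸ hwS z hz)
    (fun z hz ↦ (hexp z (.inr hz)).symm ▸ hwI z hz) ⟨ha, haI⟩ ⟨hb, hbI⟩
  rw [hexp a (.inl ha), hexp b (.inl hb), im_div_sub_pos_iff (hne a (.inl ha) v hv),
    im_div_sub_pos_iff (hne b (.inl hb) v hv)] at hsign
  have harea_ne {z : ℂ} (hzS : z ∈ S) (hzI : z ∈ segment ℝ a b) : doubleSignedArea u v z ≠ 0 := by
    rw [Ne, ← im_div_sub_eq_zero_iff (hne z (.inl hzS) v hv)]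
    exact im_ne_zero_of_mem_slitPlane (hwS z hzS) (hwI z hzI)
  rw [doubleSignedArea_pos_iff_neg hz₀ hz₀uv (harea_ne ha haI) (harea_ne hb hbI)] at hsign
  rcases (harea_ne hb hbI).lt_or_gt with hneg | hpos
  · exact (hsign.1 hneg).not_gt hneg
  · exact (hsign.2 hpos).not_gt hpos

end Segment

section Disc

theorem convex_setOf_dist_lt_dist {E : Type*} [NormedAddCommGroup E] [InnerProductSpace ℝ E]
    (a b : E) : Convex ℝ {p : E | dist p a < dist p b} := by
  have hset : {p : E | dist p a < dist p b} =
      {p : E | innerSL ℝ (b - a) p < (‖b‖ ^ 2 - ‖a‖ ^ 2) / 2} := by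
    ext p
    rw [mem_ofPred_eq, mem_ofPred_eq, dist_eq_norm, dist_eq_norm,
      ← sq_lt_sq₀ (norm_nonneg _) (norm_nonneg _), norm_sub_sq_real, norm_sub_sq_real,
      innerSL_apply_apply, inner_sub_left, real_inner_comm p a, real_inner_comm p b]
    constructor <;> intro h <;> linarith
  rw [hset]
  exact convex_halfSpace_lt (innerSL ℝ (b - a)).isLinear _

theorem re_notMem_Icc_of_mem_ball_inter_ball {U : Set ℂ} {r d : ℝ}
    (h0U : ∀ u ∈ U, r ≤ dist 0 u) (hdU : ∀ u ∈ U, r ≤ dist (d : ℂ) u)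
    (hcross : ∀ u ∈ U, ∀ v ∈ U, dist u v < 2 * r →
      Disjoint (segment ℝ (0 : ℂ) d) (segment ℝ u v))
    {u v z : ℂ} (hu : u ∈ U) (hv : v ∈ U) (hu0 : 0 ≤ u.im) (hv0 : v.im ≤ 0)
    (hz : z ∈ ball u r ∩ ball v r) : z.re ∉ Icc 0 d := by
  rintro ⟨hz0, hzd⟩
  obtain ⟨hzu, hzv⟩ : dist z u < r ∧ dist z v < r := hz
  obtain ⟨c, hcuv, hc⟩ := (convex_segment (𝕜 := ℝ) v u).isPreconnected.intermediate_value
    (left_mem_segment ℝ v u) (right_mem_segment ℝ v u) Complex.continuous_im.continuousOn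
    ⟨hv0, hu0⟩
  have hcloser (p : ℂ) (hp : ∀ w ∈ U, r ≤ dist p w) (hpim : p.im = 0) :
      |c.re - z.re| < |c.re - p.re| := by
    have hlt : dist c z < dist c p := (convex_setOf_dist_lt_dist z p).segment_subset
      (by simpa only [mem_ofPred_eq, dist_comm] using hzv.trans_le (hp v hv))
      (by simpa only [mem_ofPred_eq, dist_comm] using hzu.trans_le (hp u hu)) hcuv
    rw [Complex.dist_of_im_eq (hc.trans hpim.symm), Real.dist_eq] at hlt
    exact (Complex.abs_re_le_norm (c - z)).trans_lt (dist_eq_norm c z ▸ hlt)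
  have h0 := hcloser 0 h0U Complex.zero_im
  have hd := hcloser d hdU (Complex.ofReal_im d)
  rw [Complex.zero_re, sub_zero] at h0
  rw [Complex.ofReal_re] at hd
  -- `c` is closer to `z.re` than to both ends of `[0, d]`, so it lies between these ends.
  have hc0 : 0 ≤ c.re := by
    by_contra! hneg
    rw [abs_of_neg hneg] at h0
    linarith [neg_le_abs (c.re - z.re)]
  have hcd : c.re ≤ d := by
    by_contra! hpos
    rw [abs_of_pos (sub_pos.2 hpos)] at hd
    linarith [le_abs_self (c.re - z.re)]
  have hcseg : c ∈ segment ℝ (0 : ℂ) d := by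
    have hmem : c.re ∈ segment ℝ 0 d := segment_eq_Icc (hz0.trans hzd) ▸ ⟨hc0, hcd⟩
    have himage := mem_image_of_mem Complex.ofRealCLM.toLinearMap.toAffineMap hmem
    rw [image_segment] at himage
    convert himage using 1
    · simp
    · exact Complex.ext rfl hc
  exact Set.disjoint_left.1 (hcross v hv u hu ((dist_triangle_left v u z).trans_lt (by linarith)))
    hcseg hcuv

theorem dist_lt_iff_abs_im_sub_lt {r : ℝ} (hr : 0 < r) {z u : ℂ} :
    dist z u < r ↔ |z.im - u.im| < √(r ^ 2 - (z.re - u.re) ^ 2) := by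
  rw [Complex.dist_eq_re_im, Real.sqrt_lt' hr, Real.lt_sqrt (abs_nonneg _), sq_abs,
    lt_sub_iff_add_lt']

theorem continuous_iSup_of_equicontinuous {ι X : Type*} [TopologicalSpace X] {F : ι → X → ℝ}
    (hF : Equicontinuous F) (hbdd : ∀ x, BddAbove (range (F · x))) :
    Continuous fun x ↦ ⨆ i, F i x := by
  rcases isEmpty_or_nonempty ι with hι | hι
  · simpa only [Real.iSup_of_isEmpty] using continuous_const
  refine continuous_iff_continuousAt.2 fun x ↦ Metric.tendsto_nhds.2 fun ε hε ↦ ?_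
  filter_upwards [Metric.equicontinuousAt_iff_right.1 (hF x) (ε / 2) (half_pos hε)] with y hy
  have hclose (i : ι) : |F i x - F i y| < ε / 2 := hy i
  have hyx : ⨆ i, F i y ≤ (⨆ i, F i x) + ε / 2 := ciSup_le fun i ↦ by
    linarith [le_ciSup (hbdd x) i, (abs_lt.1 (hclose i)).1]
  have hxy : ⨆ i, F i x ≤ (⨆ i, F i y) + ε / 2 := ciSup_le fun i ↦ by
    linarith [le_ciSup (hbdd y) i, (abs_lt.1 (hclose i)).2]
  rw [Real.dist_eq, abs_lt]
  constructor <;> linarith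

theorem uniformContinuous_sqrt_sq_sub_sq (r : ℝ) :
    UniformContinuous fun x : ℝ ↦ √(r ^ 2 - x ^ 2) := by
  refine HasCompactSupport.uniformContinuous_of_continuous ?_ (by fun_prop)
  refine HasCompactSupport.intro (isCompact_Icc (a := -|r|) (b := |r|)) fun x hx ↦
    Real.sqrt_eq_zero_of_nonpos (sub_nonpos.2 (sq_le_sq.2 ?_))
  exact (not_le.1 fun hle ↦ hx (abs_le.1 hle)).le

/-- The signed height by which the open disc of radius `r` about `u` reaches across the real axis
over the abscissa `t`, measured from the axis towards the side opposite to `u`. It is `-|u.im|`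
when the disc does not meet the vertical line at `t`. -/
def protrusion (r : ℝ) (u : ℂ) (t : ℝ) : ℝ :=
  √(r ^ 2 - (t - u.re) ^ 2) - |u.im|

/-- The largest height by which the discs of radius `r` centred in `A` reach across the real axis
over the abscissa `t`; it is `0` if none of them does. -/
def maxProtrusion (r : ℝ) (A : Set ℂ) (t : ℝ) : ℝ :=
  ⨆ u : A, max 0 (protrusion r u t)

theorem protrusion_le_abs (r : ℝ) (u : ℂ) (t : ℝ) : protrusion r u t ≤ |r| := by
  have hsqrt : √(r ^ 2 - (t - u.re) ^ 2) ≤ |r| :=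
    (Real.sqrt_le_sqrt (sub_le_self _ (sq_nonneg _))).trans_eq (Real.sqrt_sq_eq_abs r)
  exact (sub_le_self _ (abs_nonneg _)).trans hsqrt

theorem bddAbove_range_max_protrusion (r : ℝ) (A : Set ℂ) (t : ℝ) :
    BddAbove (range fun u : A ↦ max 0 (protrusion r u t)) := by
  refine ⟨|r|, ?_⟩
  rintro _ ⟨u, rfl⟩
  exact max_le (abs_nonneg r) (protrusion_le_abs r u t)

theorem maxProtrusion_nonneg (r : ℝ) (A : Set ℂ) (t : ℝ) : 0 ≤ maxProtrusion r A t :=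
  Real.iSup_nonneg fun _ ↦ le_max_left _ _

theorem protrusion_le_maxProtrusion (r : ℝ) {A : Set ℂ} {u : ℂ} (hu : u ∈ A) (t : ℝ) :
    protrusion r u t ≤ maxProtrusion r A t :=
  (le_max_right _ _).trans (le_ciSup (bddAbove_range_max_protrusion r A t) ⟨u, hu⟩)

theorem maxProtrusion_le {r : ℝ} {A : Set ℂ} {t h : ℝ} (hh : 0 ≤ h)
    (hA : ∀ u ∈ A, protrusion r u t ≤ h) : maxProtrusion r A t ≤ h :=
  Real.iSup_le (fun u ↦ max_le hh (hA u u.2)) hh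

theorem continuous_maxProtrusion (r : ℝ) (A : Set ℂ) : Continuous (maxProtrusion r A) := by
  refine continuous_iSup_of_equicontinuous (fun t ↦ Metric.equicontinuousAt_iff.2 fun ε hε ↦ ?_)
    (bddAbove_range_max_protrusion r A)
  obtain ⟨δ, hδ, hclose⟩ :=
    Metric.uniformContinuous_iff.1 (uniformContinuous_sqrt_sq_sub_sq r) ε hε
  refine ⟨δ, hδ, fun s hs u ↦ ?_⟩
  rw [max_comm, max_comm 0, Real.dist_eq]
  refine (abs_max_sub_max_le_abs _ _ 0).trans_lt ?_
  rw [protrusion, protrusion, sub_sub_sub_cancel_right]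
  exact hclose (by rwa [dist_sub_right, dist_comm])

theorem protrusion_le_sqrt {r d t : ℝ} {u : ℂ} (hr : 0 ≤ r) (hd : 0 < d) (ht : t ∈ Icc 0 d)
    (h0 : r ≤ dist 0 u) (hdu : r ≤ dist (d : ℂ) u) : protrusion r u t ≤ √(t * (d - t)) := by
  have htd : 0 ≤ t * (d - t) := mul_nonneg ht.1 (sub_nonneg.2 ht.2)
  rw [Complex.dist_eq_re_im, Real.le_sqrt hr (by positivity)] at h0 hdu
  simp only [Complex.zero_re, Complex.zero_im, Complex.ofReal_re, Complex.ofReal_im] at h0 hdu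
  have hstewart : r ^ 2 - (t - u.re) ^ 2 ≤ |u.im| ^ 2 + √(t * (d - t)) ^ 2 := by
    rw [sq_abs, Real.sq_sqrt htd]
    refine le_of_mul_le_mul_left ?_ hd
    linarith [mul_le_mul_of_nonneg_left h0 (sub_nonneg.2 ht.2), mul_le_mul_of_nonneg_left hdu ht.1]
  rw [protrusion, sub_le_iff_le_add', Real.sqrt_le_left (by positivity)]
  have hcross : 0 ≤ |u.im| * √(t * (d - t)) := by positivity
  linarith [add_sq |u.im| √(t * (d - t))]

theorem protrusion_le_max_neg_protrusion {r t : ℝ} (hr : 0 < r) {u v : ℂ}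
    (hu : 0 < √(r ^ 2 - (t - u.re) ^ 2))
    (hdisj : ∀ z ∈ ball u r ∩ ball v r, z.re ≠ t) :
    protrusion r v t ≤ max 0 (-protrusion r u t) := by
  rcases (Real.sqrt_nonneg (r ^ 2 - (t - v.re) ^ 2)).eq_or_lt with hv | hv
  · exact le_max_of_le_left (by simp [protrusion, ← hv])
  · have hslice : Disjoint (ball u.im √(r ^ 2 - (t - u.re) ^ 2))
        (ball v.im √(r ^ 2 - (t - v.re) ^ 2)) :=
      Set.disjoint_left.2 fun s hsu hsv ↦ hdisj ⟨t, s⟩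
        ⟨(dist_lt_iff_abs_im_sub_lt hr).2 hsu, (dist_lt_iff_abs_im_sub_lt hr).2 hsv⟩ rfl
    rw [disjoint_ball_ball_iff hu hv, Real.dist_eq] at hslice
    refine le_max_of_le_right ?_
    rw [protrusion, protrusion]
    linarith [abs_sub u.im v.im]

theorem maxProtrusion_add_protrusion_le {r t : ℝ} (hr : 0 < r) {A B : Set ℂ} {u : ℂ} (hu : u ∈ A)
    (hut : 0 < √(r ^ 2 - (t - u.re) ^ 2))
    (hdisj : ∀ v ∈ B, ∀ z ∈ ball u r ∩ ball v r, z.re ≠ t) :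
    maxProtrusion r B t + protrusion r u t ≤ maxProtrusion r A t := by
  have hmax : maxProtrusion r B t ≤ max 0 (-protrusion r u t) :=
    maxProtrusion_le (le_max_left _ _) fun v hv ↦
      protrusion_le_max_neg_protrusion hr hut (hdisj v hv)
  rcases le_max_iff.1 hmax with hmax | hmax
  · linarith [protrusion_le_maxProtrusion r hu t]
  · linarith [maxProtrusion_nonneg r A t]

end Disc

section Path

theorem sq_maxProtrusion_sub_maxProtrusion_le {r d t : ℝ} (hr : 0 ≤ r) (hd : 0 < d)
    (ht : t ∈ Icc 0 d) {U A B : Set ℂ} (h0U : ∀ u ∈ U, r ≤ dist 0 u)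
    (hdU : ∀ u ∈ U, r ≤ dist (d : ℂ) u) (hA : A ⊆ U) (hB : B ⊆ U) :
    (maxProtrusion r B t - maxProtrusion r A t) ^ 2 ≤ t * (d - t) := by
  have hle {K : Set ℂ} (hK : K ⊆ U) : maxProtrusion r K t ≤ √(t * (d - t)) :=
    maxProtrusion_le (Real.sqrt_nonneg _) fun u hu ↦
      protrusion_le_sqrt hr hd ht (h0U u (hK hu)) (hdU u (hK hu))
  have habs := abs_sub_le_of_nonneg_of_le (maxProtrusion_nonneg r B t) (hle hB)
    (maxProtrusion_nonneg r A t) (hle hA)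
  rwa [Real.le_sqrt (abs_nonneg _) (mul_nonneg ht.1 (sub_nonneg.2 ht.2)), sq_abs] at habs

theorem le_dist_mk_maxProtrusion_sub {U : Set ℂ} {r t : ℝ} (hr : 0 < r)
    (hdisj : ∀ u ∈ U, ∀ v ∈ U, 0 ≤ u.im → v.im ≤ 0 → ∀ z ∈ ball u r ∩ ball v r, z.re ≠ t)
    {u : ℂ} (hu : u ∈ U) :
    r ≤ dist (⟨t, maxProtrusion r {v ∈ U | v.im ≤ 0} t -
      maxProtrusion r {v ∈ U | 0 ≤ v.im} t⟩ : ℂ) u := by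
  by_contra! hlt
  rw [dist_lt_iff_abs_im_sub_lt hr] at hlt
  have hut := (abs_nonneg _).trans_lt hlt
  rw [abs_lt] at hlt
  rcases le_total 0 u.im with him | him
  · have hsum := maxProtrusion_add_protrusion_le hr (A := {v ∈ U | 0 ≤ v.im})
      (B := {v ∈ U | v.im ≤ 0}) ⟨hu, him⟩ hut fun v hv ↦ hdisj u hu v hv.1 him hv.2
    rw [protrusion, abs_of_nonneg him] at hsum
    linarith
  · have hsum := maxProtrusion_add_protrusion_le hr (A := {v ∈ U | v.im ≤ 0})
      (B := {v ∈ U | 0 ≤ v.im}) ⟨hu, him⟩ hut fun v hv z hz ↦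
        hdisj v hv.1 u hu hv.2 him z hz.symm
    rw [protrusion, abs_of_nonpos him] at hsum
    linarith

theorem exists_isPreconnected_of_disjoint_segment {U : Set ℂ} {r d : ℝ} (hr : 0 < r) (hd : 0 < d)
    (h0U : ∀ u ∈ U, r ≤ dist 0 u) (hdU : ∀ u ∈ U, r ≤ dist (d : ℂ) u)
    (hcross : ∀ u ∈ U, ∀ v ∈ U, dist u v < 2 * r →
      Disjoint (segment ℝ (0 : ℂ) d) (segment ℝ u v)) :
    ∃ T : Set ℂ, IsPreconnected T ∧ 0 ∈ T ∧ (d : ℂ) ∈ T ∧ T ⊆ closedBall 0 d ∧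
      ∀ z ∈ T, ∀ u ∈ U, r ≤ dist z u := by
  set g : ℝ → ℝ := fun t ↦
    maxProtrusion r {v ∈ U | v.im ≤ 0} t - maxProtrusion r {v ∈ U | 0 ≤ v.im} t
  have hg_sq (t : ℝ) (ht : t ∈ Icc 0 d) : g t ^ 2 ≤ t * (d - t) :=
    sq_maxProtrusion_sub_maxProtrusion_le hr.le hd ht h0U hdU (sep_subset U _) (sep_subset U _)
  have hg_cont : Continuous fun t : ℝ ↦ (⟨t, g t⟩ : ℂ) :=
    Complex.equivRealProdCLM.symm.continuous.comp <| continuous_id.prodMk <|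
      (continuous_maxProtrusion r _).sub (continuous_maxProtrusion r _)
  have hg_end {t : ℝ} (ht : t ∈ Icc 0 d) (hend : t * (d - t) = 0) : g t = 0 :=
    sq_nonpos_iff (g t) |>.1 (hend ▸ hg_sq t ht)
  refine ⟨(fun t ↦ ⟨t, g t⟩) '' Icc 0 d, isPreconnected_Icc.image _ hg_cont.continuousOn,
    ⟨0, left_mem_Icc.2 hd.le, ?_⟩, ⟨d, right_mem_Icc.2 hd.le, ?_⟩, ?_, ?_⟩
  · exact Complex.ext rfl (hg_end (left_mem_Icc.2 hd.le) (zero_mul _))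
  · exact Complex.ext rfl (hg_end (right_mem_Icc.2 hd.le) (by rw [sub_self, mul_zero]))
  · rintro _ ⟨t, ht, rfl⟩
    rw [mem_closedBall, dist_zero_right, ← sq_le_sq₀ (norm_nonneg _) hd.le, Complex.sq_norm,
      Complex.normSq_mk]
    linarith [hg_sq t ht, mul_le_mul_of_nonneg_right ht.2 hd.le]
  · rintro _ ⟨t, ht, rfl⟩ u hu
    refine le_dist_mk_maxProtrusion_sub hr ?_ hu
    rintro v hv w hw hv0 hw0 z hz rfl
    exact re_notMem_Icc_of_mem_ball_inter_ball h0U hdU hcross hv hw hv0 hw0 hz ht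

end Path

section Exterior

variable {E : Type*} [NormedAddCommGroup E] [NormedSpace ℝ E]

theorem isPreconnected_compl_closedBall (hE : 1 < Module.rank ℝ E) (c : E) {R : ℝ} (hR : 0 ≤ R) :
    IsPreconnected (closedBall c R)ᶜ := by
  have hpolar : (closedBall c R)ᶜ = (fun p : ℝ × E ↦ c + p.1 • p.2) '' (Ioi R ×ˢ sphere 0 1) := by
    ext z
    simp only [mem_compl_iff, mem_closedBall, not_le, mem_image, mem_prod, mem_Ioi,
      mem_sphere_zero_iff_norm, Prod.exists]
    constructor
    · intro hz
      have hne : ‖z - c‖ ≠ 0 := (hR.trans_lt (dist_eq_norm z c ▸ hz)).ne'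
      refine ⟨‖z - c‖, ‖z - c‖⁻¹ • (z - c), ⟨dist_eq_norm z c ▸ hz, ?_⟩, ?_⟩
      · rw [norm_smul, norm_inv, norm_norm, inv_mul_cancel₀ hne]
      · rw [smul_inv_smul₀ hne, add_sub_cancel]
    · rintro ⟨s, p, ⟨hs, hp⟩, rfl⟩
      rwa [dist_self_add_left, norm_smul, hp, mul_one, Real.norm_of_nonneg (hR.trans hs.le)]
  rw [hpolar]
  exact (isPreconnected_Ioi.prod (isPreconnected_sphere hE 0 1)).image _ (by fun_prop)

theorem isPreconnected_setOf_not_isBounded_connectedComponentIn (hE : 1 < Module.rank ℝ E)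
    {K : Set E} (hK : Bornology.IsBounded K) :
    IsPreconnected {z ∈ Kᶜ | ¬Bornology.IsBounded (connectedComponentIn Kᶜ z)} := by
  obtain ⟨R, hR, hKR⟩ := hK.subset_closedBall_lt 0 0
  have hmeets {z : E} (hz : ¬Bornology.IsBounded (connectedComponentIn Kᶜ z)) :
      ∃ p ∈ connectedComponentIn Kᶜ z, p ∈ (closedBall 0 R)ᶜ :=
    not_subset.1 (mt isBounded_closedBall.subset hz)
  refine isPreconnected_of_forall_pair fun a ha b hb ↦
    ⟨connectedComponentIn Kᶜ a, fun z hz ↦ ?_, mem_connectedComponentIn ha.1, ?_,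
      isPreconnected_connectedComponentIn⟩
  · exact ⟨connectedComponentIn_subset _ _ hz, connectedComponentIn_eq hz ▸ ha.2⟩
  · obtain ⟨p, hpa, hp⟩ := hmeets ha.2
    obtain ⟨q, hqb, hq⟩ := hmeets hb.2
    have hqp : q ∈ connectedComponentIn Kᶜ p :=
      (isPreconnected_compl_closedBall hE 0 hR.le).subset_connectedComponentIn hp
        (compl_subset_compl.2 hKR) hq
    rw [connectedComponentIn_eq hpa, connectedComponentIn_eq hqp, ← connectedComponentIn_eq hqb]
    exact mem_connectedComponentIn hb.1

end Exterior

theorem SimplePolygon.isPreconnected_compl_region (P : SimplePolygon) :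
    IsPreconnected P.regionᶜ := by
  have hbdd : Bornology.IsBounded P.bdryCurve := (isCompact_Icc.image P.continuous).isBounded
  have hrank : 1 < Module.rank ℝ Plane := by
    rw [← Module.finrank_eq_rank, finrank_euclideanSpace_fin]
    norm_num
  have hcompl : P.regionᶜ = {z ∈ P.bdryCurveᶜ |
      ¬Bornology.IsBounded (connectedComponentIn P.bdryCurveᶜ z)} :=
    Set.ext fun z ↦ by
      simp only [SimplePolygon.region, mem_compl_iff, mem_union, mem_ofPred_eq]
      tauto
  exact hcompl ▸ isPreconnected_setOf_not_isBounded_connectedComponentIn hrank hbdd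

section Component

theorem exists_isometryEquiv_complex {E : Type*} [NormedAddCommGroup E] [InnerProductSpace ℝ E]
    (hE : Module.finrank ℝ E = 2) (a b : E) : ∃ φ : E ≃ᵢ ℂ, φ a = 0 ∧ φ b = (dist a b : ℂ) := by
  have : FiniteDimensional ℝ E := Module.finite_of_finrank_eq_succ hE
  let e : E ≃ₗᵢ[ℝ] ℂ :=
    (Complex.isometryOfOrthonormal ((stdOrthonormalBasis ℝ E).reindex (finCongr hE))).symm
  obtain ⟨c, hc⟩ : ∃ c : Circle, c * e (b - a) = (dist a b : ℂ) := by
    rcases eq_or_ne a b with rfl | hab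
    · exact ⟨1, by simp⟩
    · have hne : e (b - a) ≠ 0 := by simpa [sub_eq_zero] using hab.symm
      have hnorm : ‖(dist a b : ℂ) / e (b - a)‖ = 1 := by
        rw [norm_div, Complex.norm_real, e.norm_map, ← dist_eq_norm, dist_comm b,
          Real.norm_of_nonneg dist_nonneg, div_self (dist_ne_zero.2 hab)]
      exact ⟨⟨_, mem_sphere_zero_iff_norm.2 hnorm⟩, div_mul_cancel₀ _ hne⟩
  refine ⟨(IsometryEquiv.subRight a).trans (e.trans (rotation c)).toIsometryEquiv, ?_, ?_⟩
  · simp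
  · simpa using hc

theorem exists_isPreconnected_subset_closedBall {E : Type*} [NormedAddCommGroup E]
    [InnerProductSpace ℝ E] (hE : Module.finrank ℝ E = 2) {U S : Set E} (hU : IsPreconnected U)
    (hS : IsPreconnected S) {r : ℝ} (hSU : ∀ s ∈ S, ∀ u ∈ U, r ≤ dist s u) {a b : E} (ha : a ∈ S)
    (hb : b ∈ S) (hab : dist a b < 2 * r) :
    ∃ T : Set E, IsPreconnected T ∧ a ∈ T ∧ b ∈ T ∧ T ⊆ closedBall a (dist a b) ∧
      ∀ z ∈ T, ∀ u ∈ U, r ≤ dist z u := by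
  rcases eq_or_ne a b with rfl | hne
  · exact ⟨{a}, isPreconnected_singleton, rfl, rfl, by simp, by simpa using hSU a ha⟩
  have hr : 0 < r := by linarith [dist_nonneg (x := a) (y := b)]
  obtain ⟨φ, hφa, hφb⟩ := exists_isometryEquiv_complex hE a b
  have hφU (p : E) (hp : ∀ u ∈ U, r ≤ dist p u) : ∀ w ∈ φ '' U, r ≤ dist (φ p) w := by
    simpa only [forall_mem_image, φ.dist_eq] using hp
  have hφS : ∀ s ∈ φ '' S, ∀ w ∈ φ '' U, r ≤ dist s w :=
    forall_mem_image.2 fun s hs ↦ hφU s (hSU s hs)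
  obtain ⟨T, hT, h0T, hdT, hTball, hTU⟩ := exists_isPreconnected_of_disjoint_segment hr
    (dist_pos.2 hne) (hφa ▸ hφU a (hSU a ha)) (hφb ▸ hφU b (hSU b hb)) fun u hu v hv ↦
      disjoint_segment_of_le_dist (hU.image φ φ.continuous.continuousOn)
        (hS.image φ φ.continuous.continuousOn) hφS ⟨a, ha, hφa⟩ ⟨b, hb, hφb⟩
        (by rwa [← hφa, ← hφb, φ.dist_eq]) hu hv
  refine ⟨φ ⁻¹' T, φ.toHomeomorph.isPreconnected_preimage.2 hT, ?_, ?_, fun z hz ↦ ?_,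
    fun z hz u hu ↦ ?_⟩
  · rwa [mem_preimage, hφa]
  · rwa [mem_preimage, hφb]
  · simpa only [← hφa, mem_closedBall, φ.dist_eq] using hTball hz
  · simpa only [φ.dist_eq] using hTU _ hz _ (mem_image_of_mem φ hu)

theorem ball_subset_iff_forall_compl_le_dist {E : Type*} [PseudoMetricSpace E] {W : Set E} {x : E}
    {r : ℝ} : ball x r ⊆ W ↔ ∀ u ∈ Wᶜ, r ≤ dist x u :=
  forall_congr' fun u ↦ by rw [mem_ball', mem_compl_iff, ← not_lt, not_imp_not]

theorem ball_inter_component_connected_general {E : Type*} [NormedAddCommGroup E]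
    [InnerProductSpace ℝ E] (hE : Module.finrank ℝ E = 2) {W : Set E} (hW : IsPreconnected Wᶜ)
    {r ρ : ℝ} (hρ : 0 < ρ) (hρr : ρ ≤ 2 * r) {x : E} (hx : ball x r ⊆ W) :
    IsConnected (ball x ρ ∩ connectedComponentIn {y | ball y r ⊆ W} x) := by
  set F : Set E := {y | ball y r ⊆ W}
  have hxC : x ∈ connectedComponentIn F x := mem_connectedComponentIn hx
  refine ⟨⟨x, mem_ball_self hρ, hxC⟩, isPreconnected_of_forall x ?_⟩
  rintro y ⟨hyρ, hyC⟩
  rw [mem_ball'] at hyρ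
  obtain ⟨T, hT, hxT, hyT, hTball, hTW⟩ := exists_isPreconnected_subset_closedBall hE hW
    isPreconnected_connectedComponentIn
    (fun s hs ↦ ball_subset_iff_forall_compl_le_dist.1 (connectedComponentIn_subset F x hs))
    hxC hyC (hyρ.trans_le hρr)
  have hTF : T ⊆ F := fun z hz ↦ ball_subset_iff_forall_compl_le_dist.2 (hTW z hz)
  exact ⟨T, subset_inter (hTball.trans (closedBall_subset_ball hyρ))
    (hT.subset_connectedComponentIn hxT hTF), hxT, hyT, hT⟩

end Component

/-- For any point `x` of the free space `F` of a simple polygon, with `C` the connected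
component of `F` containing `x`, the set `D₂(x) ∩ C` is connected. -/
theorem ball_inter_component_connected (P : SimplePolygon) (x : Plane)
    (hx : x ∈ P.freeSpace) :
    IsConnected (Metric.ball x 2 ∩ connectedComponentIn P.freeSpace x) :=
  ball_inter_component_connected_general finrank_euclideanSpace_fin P.isPreconnected_compl_region
    two_pos (mul_one 2).ge hx
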